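/- arXiv:1802.08309 — 2 statements merged into one kernel-verified Lean document; each statement's English description precedes it below -/
import Mathlib

section
/- Let ℬ ⊆ ℕ be a primitive set, H the closure of the image of the diagonal embedding Δ : ℤ → ∏_{b∈ℬ} ℤ/bℤ with normalized Haar measure m_H, and ℬ' ⊆ ℬ. Then m_H(W_{ℬ'}) = 1 − δ(M_{ℬ'}), where W_{ℬ'} := {h ∈ H : h_b ≠ 0 for all b ∈ ℬ'}. -/
open Filter Set Topology MeasureTheory

open scoped Classical

noncomputable section

/-- The diagonal embedding `Δ : ℤ → ∏_{b ∈ B} ℤ/bℤ`. -/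
def diagEmb (B : Set ℕ) : ℤ →+ ((b : B) → ZMod b) where
  toFun n := fun b => (n : ZMod b)
  map_zero' := by ext b; simp
  map_add' m n := by ext b; simp [Int.cast_add]

/-- `H`, the topological closure of `Δ(ℤ)`, as a (closed) subgroup of `∏_{b ∈ B} ℤ/bℤ`. -/
def Hgrp (B : Set ℕ) : AddSubgroup ((b : B) → ZMod b) :=
  (diagEmb B).range.topologicalClosure

instance (B : Set ℕ) [∀ b : B, NeZero (b : ℕ)] : CompactSpace (Hgrp B) :=
  isCompact_iff_compactSpace.mp ((AddSubgroup.isClosed_topologicalClosure _).isCompact)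

instance (B : Set ℕ) : MeasurableSpace (Hgrp B) := borel _

instance (B : Set ℕ) : BorelSpace (Hgrp B) := ⟨rfl⟩

/-- The normalized Haar measure `m_H` on the compact abelian group `H`. -/
def mH (B : Set ℕ) [∀ b : B, NeZero (b : ℕ)] : Measure (Hgrp B) :=
  Measure.addHaarMeasure ⊤

/-- The window `W_{B'} ⊆ H` determined by a subset `B' ⊆ B`. -/
def Wset (B : Set ℕ) (B' : Set ℕ) : Set (Hgrp B) :=
  {h | ∀ b : B, (b : ℕ) ∈ B' → (h : (b : B) → ZMod b) b ≠ 0}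

/-- The set of multiples `M_B ⊆ ℤ` of a set `B ⊆ ℕ`. -/
def multiplesZ (B : Set ℕ) : Set ℤ := {n : ℤ | ∃ b ∈ B, (b : ℤ) ∣ n}

/-- The `B`-free integers `F_B = ℤ ∖ M_B`. -/
def freeZ (B : Set ℕ) : Set ℤ := (multiplesZ B)ᶜ

/-- The logarithmically weighted averages `(1/log n) ∑_{k=1}^n 1_A(k)/k`. -/
def logWeight (A : Set ℤ) (n : ℕ) : ℝ :=
  (Real.log n)⁻¹ * ∑ k ∈ Finset.Icc 1 n, A.indicator (fun m : ℤ => ((m : ℝ))⁻¹) (k : ℤ)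

/-- The lower logarithmic density of a set `A ⊆ ℤ`. -/
def logDensLow (A : Set ℤ) : ℝ := liminf (logWeight A) atTop

/-- `A ⊆ ℤ` has logarithmic density `d`. -/
def HasLogDensity (A : Set ℤ) (d : ℝ) : Prop := Tendsto (logWeight A) atTop (𝓝 d)

/-- `B` is primitive: no element divides another one. -/
def Primitive (B : Set ℕ) : Prop := ∀ b ∈ B, ∀ b' ∈ B, b ∣ b' → b = b'

/-- `B` is Behrend: its set of multiples has logarithmic density one. -/
def IsBehrend (B : Set ℕ) : Prop := logDensLow (multiplesZ B) = 1

/-- `B` is taut: removing any element strictly decreases the logarithmic density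
of the set of multiples. -/
def IsTaut (B : Set ℕ) : Prop :=
  ∀ b ∈ B, logDensLow (multiplesZ (B \ {b})) < logDensLow (multiplesZ B)

/-- `B̃^(N)`: the elements of `B` having no prime factor `≤ N`. -/
def Btilde (B : Set ℕ) (N : ℕ) : Set ℕ := {b ∈ B | ∀ p : ℕ, p.Prime → p ∣ b → N < p}

/-- `B^(N)`: the elements of `B` all of whose prime factors are `≤ N`. -/
def Bsmooth (B : Set ℕ) (N : ℕ) : Set ℕ := {b ∈ B | ∀ p : ℕ, p.Prime → p ∣ b → p ≤ N}

/-!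
The window `W_{B'}` is the decreasing intersection of the finite windows `W_{B' ∩ [1, N]}`, so its
measure is the limit of theirs. For a finite `S ⊆ B` with every `b ∈ S` dividing `L`, a point
`h ∈ H` agrees with some `Δ(n)` on the coordinates in `S`, so exactly `#(M_S ∩ [0, L))` of the
translates `h + Δ(j)`, `0 ≤ j < L`, lie outside `W_S`; integrating over `h` settles the finite case.

It remains to see that `δ(M_{B' ∩ [1, N]}) → δ(M_{B'})` (Davenport–Erdős). Let `f` be the indicator
of a set of multiples, `F(s) = ∑ f(n) / n ^ s`, and `u = t - s ≥ 0`. Divisor sums of Jordan's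
totient `J_u` are `n ^ u`, and `J_u ≥ 0`; hence `ζ(s) = D(t) ζ(t)` with `D(t) = ∑ J_u(n) / n ^ t`,
while `f(m) ≤ f(n)` for `m ∣ n` gives `D(t) F(t) ≤ F(s)`. So `F / ζ` is antitone on `(1, ∞)`. If
the set of multiples is periodic, `F / ζ` tends to its density `δ` as `s → 1⁺`, so `F ≤ δ ζ`. This
inequality passes to the increasing union of the `M_{B' ∩ [1, N]}`, with
`δ = sup_N δ(M_{B' ∩ [1, N]})`, and letting `s → 1⁺` there bounds the lower logarithmic density of
`M_{B'}` by the same supremum.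
-/

section JordanTotient

lemma nonneg_of_isMultiplicative {R : Type*} [CommSemiring R] [PartialOrder R] [IsOrderedRing R]
    {f : ArithmeticFunction R} (hf : f.IsMultiplicative)
    (hpow : ∀ p k : ℕ, p.Prime → 0 ≤ f (p ^ k)) (n : ℕ) : 0 ≤ f n := by
  rcases eq_or_ne n 0 with rfl | hn
  · simp
  · rw [hf.multiplicative_factorization _ hn]
    exact Finset.prod_nonneg fun p hp => hpow p _ (Nat.prime_of_mem_primeFactors hp)

/-- The arithmetic function `n ↦ n ^ u` for a real exponent `u`. -/
def rpowArith (u : ℝ) : ArithmeticFunction ℝ := ⟨fun n => if n = 0 then 0 else (n : ℝ) ^ u, rfl⟩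

lemma rpowArith_apply (u : ℝ) {n : ℕ} (hn : n ≠ 0) : rpowArith u n = (n : ℝ) ^ u := if_neg hn

lemma isMultiplicative_rpowArith (u : ℝ) : (rpowArith u).IsMultiplicative :=
  ArithmeticFunction.IsMultiplicative.iff_ne_zero.2
    ⟨by simp [rpowArith], fun hm hn _ => by simp [rpowArith, hm, hn, Real.mul_rpow]⟩

/-- Jordan's totient function `J_u` with a real exponent `u`: the arithmetic function whose
divisor sums are `n ^ u`. -/
def jordanTotient (u : ℝ) : ArithmeticFunction ℝ :=
  rpowArith u * (ArithmeticFunction.moebius : ArithmeticFunction ℝ)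

lemma isMultiplicative_jordanTotient (u : ℝ) : (jordanTotient u).IsMultiplicative :=
  (isMultiplicative_rpowArith u).mul ArithmeticFunction.isMultiplicative_moebius.intCast

lemma sum_divisors_jordanTotient (u : ℝ) {n : ℕ} (hn : n ≠ 0) :
    ∑ d ∈ n.divisors, jordanTotient u d = (n : ℝ) ^ u := by
  rw [← ArithmeticFunction.coe_mul_zeta_apply, jordanTotient, mul_assoc,
    ArithmeticFunction.coe_moebius_mul_coe_zeta, mul_one, rpowArith_apply u hn]

lemma jordanTotient_prime_pow_succ (u : ℝ) {p : ℕ} (hp : p.Prime) (k : ℕ) :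
    jordanTotient u (p ^ (k + 1)) = ((p ^ (k + 1) : ℕ) : ℝ) ^ u - ((p ^ k : ℕ) : ℝ) ^ u := by
  rw [← sum_divisors_jordanTotient u (pow_ne_zero _ hp.ne_zero),
    ← sum_divisors_jordanTotient u (pow_ne_zero _ hp.ne_zero), Nat.sum_divisors_prime_pow hp,
    Nat.sum_divisors_prime_pow hp, Finset.sum_range_succ, add_sub_cancel_left]

lemma jordanTotient_nonneg {u : ℝ} (hu : 0 ≤ u) (n : ℕ) : 0 ≤ jordanTotient u n := by
  refine nonneg_of_isMultiplicative (isMultiplicative_jordanTotient u) (fun p k hp => ?_) n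
  cases k with
  | zero => simp [(isMultiplicative_jordanTotient u).1]
  | succ k =>
    rw [jordanTotient_prime_pow_succ u hp, sub_nonneg]
    gcongr
    exacts [hp.one_le, k.le_succ]

lemma jordanTotient_le_rpow {u : ℝ} (hu : 0 ≤ u) {n : ℕ} (hn : n ≠ 0) :
    jordanTotient u n ≤ (n : ℝ) ^ u := by
  rw [← sum_divisors_jordanTotient u hn]
  exact Finset.single_le_sum (fun d _ => jordanTotient_nonneg hu d) (Nat.mem_divisors_self n hn)

lemma jordanTotient_convolution_one (u : ℝ) {n : ℕ} (hn : n ≠ 0) :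
    LSeries.convolution (jordanTotient u) (1 : ℕ → ℝ) n = (n : ℝ) ^ u := by
  simp [LSeries.convolution_def, Nat.sum_divisorsAntidiagonal (fun d _ => jordanTotient u d),
    sum_divisors_jordanTotient u hn]

lemma jordanTotient_convolution_le {u : ℝ} (hu : 0 ≤ u) {f : ℕ → ℝ}
    (hf : ∀ m n, m ∣ n → f m ≤ f n) {n : ℕ} (hn : n ≠ 0) :
    LSeries.convolution (jordanTotient u) f n ≤ (n : ℝ) ^ u * f n := by
  rw [LSeries.convolution_def, ← sum_divisors_jordanTotient u hn, Finset.sum_mul,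
    ← Nat.sum_divisorsAntidiagonal (fun d _ => jordanTotient u d * f n)]
  refine Finset.sum_le_sum fun p hp => mul_le_mul_of_nonneg_left (hf _ _ ?_)
    (jordanTotient_nonneg hu _)
  exact Dvd.intro_left p.1 (Nat.mem_divisorsAntidiagonal.1 hp).1

end JordanTotient

section DirichletSum

/-- The Dirichlet series `∑ f(n) / n ^ s` of a real sequence at a real point. Since `0 ^ s = 0`
for `s ≠ 0` and `x / 0 = 0`, the value `f 0` does not contribute. -/
def dirichletSum (f : ℕ → ℝ) (s : ℝ) : ℝ := ∑' n : ℕ, f n / (n : ℝ) ^ s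

lemma dirichletSum_nonneg {f : ℕ → ℝ} (hf : ∀ n, 0 ≤ f n) (s : ℝ) : 0 ≤ dirichletSum f s :=
  tsum_nonneg fun n => div_nonneg (hf n) (by positivity)

lemma dirichletSum_sub {f g : ℕ → ℝ} {s : ℝ} (hf : Summable fun n : ℕ => f n / (n : ℝ) ^ s)
    (hg : Summable fun n : ℕ => g n / (n : ℝ) ^ s) :
    dirichletSum (f - g) s = dirichletSum f s - dirichletSum g s := by
  simp only [dirichletSum, Pi.sub_apply, sub_div, hf.tsum_sub hg]

lemma dirichletSum_const (c s : ℝ) : dirichletSum (fun _ => c) s = c * dirichletSum 1 s := by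
  simp only [dirichletSum, ← tsum_mul_left, Pi.one_apply, mul_one_div]

lemma summable_one_div_rpow {s : ℝ} (hs : 1 < s) :
    Summable fun n : ℕ => (1 : ℕ → ℝ) n / (n : ℝ) ^ s :=
  Real.summable_one_div_nat_rpow.2 hs

lemma summable_div_rpow_of_abs_le {f : ℕ → ℝ} {C s : ℝ} (hf : ∀ n, |f n| ≤ C) (hs : 1 < s) :
    Summable fun n : ℕ => f n / (n : ℝ) ^ s := by
  refine ((Real.summable_one_div_nat_rpow.2 hs).mul_left C).of_norm_bounded fun n => ?_
  rw [Real.norm_eq_abs, abs_div, abs_of_nonneg (by positivity : (0 : ℝ) ≤ (n : ℝ) ^ s),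
    mul_one_div]
  gcongr
  exact hf n

lemma summable_const_div_rpow (c : ℝ) {s : ℝ} (hs : 1 < s) :
    Summable fun n : ℕ => c / (n : ℝ) ^ s :=
  summable_div_rpow_of_abs_le (fun _ => le_rfl) hs

lemma summable_div_rpow_of_le {f : ℕ → ℝ} {s t : ℝ} (hs : 0 < s) (hst : s ≤ t)
    (hf : Summable fun n : ℕ => f n / (n : ℝ) ^ s) :
    Summable fun n : ℕ => f n / (n : ℝ) ^ t := by
  refine hf.norm.of_norm_bounded fun n => ?_
  rcases eq_or_ne n 0 with rfl | hn
  · simp [Real.zero_rpow hs.ne', Real.zero_rpow (hs.trans_le hst).ne']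
  · have hn1 : (1 : ℝ) ≤ n := Nat.one_le_cast.2 (Nat.one_le_iff_ne_zero.2 hn)
    simp only [norm_div, Real.norm_of_nonneg (Real.rpow_nonneg n.cast_nonneg _)]
    gcongr

lemma tendsto_dirichletSum_one_atTop : Tendsto (dirichletSum 1) (𝓝[>] 1) atTop := by
  have hinv : Tendsto (fun s : ℝ => (s - 1)⁻¹) (𝓝[>] 1) atTop :=
    tendsto_inv_nhdsGT_zero.comp <| tendsto_nhdsWithin_iff.2
      ⟨((continuous_sub_right (1 : ℝ)).tendsto' 1 0 (sub_self 1)).mono_left nhdsWithin_le_nhds,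
        eventually_mem_nhdsWithin.mono fun _ hs => sub_pos.2 (mem_Ioi.1 hs)⟩
  refine (tendsto_sub_mul_tsum_nat_rpow.pos_mul_atTop one_pos hinv).congr' ?_
  filter_upwards [self_mem_nhdsWithin] with s hs
  have hs' : s - 1 ≠ 0 := (sub_pos.2 hs).ne'
  simp only [dirichletSum, Pi.one_apply]
  field_simp

lemma tendsto_sum_Icc_dirichletSum {f : ℕ → ℝ} {s : ℝ} (hs : s ≠ 0)
    (hf : Summable fun n : ℕ => f n / (n : ℝ) ^ s) :
    Tendsto (fun n : ℕ => ∑ k ∈ Finset.Icc 1 n, f k / (k : ℝ) ^ s) atTop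
      (𝓝 (dirichletSum f s)) := by
  refine (hf.hasSum.tendsto_sum_nat.comp (tendsto_add_atTop_nat 1)).congr fun n => ?_
  rw [Function.comp_apply, Finset.range_eq_Ico, Finset.sum_eq_sum_Ico_succ_bot n.succ_pos]
  simp [Real.zero_rpow hs, Finset.Ico_add_one_right_eq_Icc]

lemma lseriesHasSum_ofReal_iff {f : ℕ → ℝ} {s a : ℝ} (hs : s ≠ 0) :
    LSeriesHasSum (fun n => (f n : ℂ)) s a ↔ HasSum (fun n : ℕ => f n / (n : ℝ) ^ s) a := by
  rw [← Complex.hasSum_ofReal, LSeriesHasSum]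
  congr! 2 with n
  rw [LSeries.term_of_ne_zero' (Complex.ofReal_ne_zero.2 hs), Complex.ofReal_div,
    Complex.ofReal_cpow n.cast_nonneg, Complex.ofReal_natCast]

lemma hasSum_convolution_div_rpow {f g : ℕ → ℝ} {s a b : ℝ} (hs : s ≠ 0)
    (hf : HasSum (fun n : ℕ => f n / (n : ℝ) ^ s) a)
    (hg : HasSum (fun n : ℕ => g n / (n : ℝ) ^ s) b) :
    HasSum (fun n : ℕ => LSeries.convolution f g n / (n : ℝ) ^ s) (a * b) := by
  rw [← lseriesHasSum_ofReal_iff hs] at hf hg ⊢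
  convert hf.convolution hg using 1
  · ext n
    simp [LSeries.convolution_def]
  · push_cast; rfl

lemma rpow_sub_mul_div_rpow (x : ℝ) (s t : ℝ) {n : ℕ} (hn : n ≠ 0) :
    (n : ℝ) ^ (t - s) * x / (n : ℝ) ^ t = x / (n : ℝ) ^ s := by
  have := Nat.cast_pos (α := ℝ).2 (Nat.pos_of_ne_zero hn)
  rw [Real.rpow_sub this]
  field_simp

lemma summable_jordanTotient_div_rpow {s t : ℝ} (hs : 1 < s) (hst : s ≤ t) :
    Summable fun n : ℕ => jordanTotient (t - s) n / (n : ℝ) ^ t := by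
  have hu := sub_nonneg.2 hst
  refine (summable_one_div_rpow hs).of_nonneg_of_le
    (fun n => div_nonneg (jordanTotient_nonneg hu n) (by positivity)) fun n => ?_
  rcases eq_or_ne n 0 with rfl | hn
  · simp [Real.zero_rpow (by linarith : s ≠ 0)]
  · rw [Pi.one_apply, ← rpow_sub_mul_div_rpow 1 s t hn, mul_one]
    gcongr
    exact jordanTotient_le_rpow hu hn

lemma dirichletSum_one_eq_mul {s t : ℝ} (hs : 1 < s) (hst : s ≤ t) :
    dirichletSum 1 s = dirichletSum (jordanTotient (t - s)) t * dirichletSum 1 t := by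
  have ht : 1 < t := hs.trans_le hst
  refine .trans (tsum_congr fun n => ?_) (hasSum_convolution_div_rpow (by linarith)
    (summable_jordanTotient_div_rpow hs hst).hasSum (summable_one_div_rpow ht).hasSum).tsum_eq
  rcases eq_or_ne n 0 with rfl | hn
  · simp [Real.zero_rpow (by linarith : s ≠ 0)]
  · rw [jordanTotient_convolution_one _ hn, Pi.one_apply, ← rpow_sub_mul_div_rpow 1 s t hn,
      mul_one]

lemma dirichletSum_jordanTotient_mul_le {f : ℕ → ℝ} {s t : ℝ} (hf : ∀ m n, m ∣ n → f m ≤ f n)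
    (hs : 1 < s) (hst : s ≤ t) (hfs : Summable fun n : ℕ => f n / (n : ℝ) ^ s) :
    dirichletSum (jordanTotient (t - s)) t * dirichletSum f t ≤ dirichletSum f s := by
  have hft := summable_div_rpow_of_le (by linarith) hst hfs
  refine hasSum_le (fun n => ?_) (hasSum_convolution_div_rpow (by linarith)
    (summable_jordanTotient_div_rpow hs hst).hasSum hft.hasSum) hfs.hasSum
  rcases eq_or_ne n 0 with rfl | hn
  · simp [Real.zero_rpow (by linarith : s ≠ 0)]
  · rw [← rpow_sub_mul_div_rpow (f n) s t hn]
    gcongr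
    exact jordanTotient_convolution_le (sub_nonneg.2 hst) hf hn

lemma dirichletSum_mul_dirichletSum_one_le {f : ℕ → ℝ} {s t : ℝ}
    (hf : ∀ m n, m ∣ n → f m ≤ f n) (hs : 1 < s) (hst : s ≤ t)
    (hfs : Summable fun n : ℕ => f n / (n : ℝ) ^ s) :
    dirichletSum f t * dirichletSum 1 s ≤ dirichletSum f s * dirichletSum 1 t := by
  calc dirichletSum f t * dirichletSum 1 s
      = dirichletSum (jordanTotient (t - s)) t * dirichletSum f t * dirichletSum 1 t := by
        rw [dirichletSum_one_eq_mul hs hst]; ring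
    _ ≤ dirichletSum f s * dirichletSum 1 t :=
        mul_le_mul_of_nonneg_right (dirichletSum_jordanTotient_mul_le hf hs hst hfs)
          (dirichletSum_nonneg (fun _ => zero_le_one) t)

lemma sum_Icc_mul_le_of_antitoneOn {R : Type*} [CommRing R] [LinearOrder R]
    [IsStrictOrderedRing R] {t w : ℕ → R} {K : R} (ht : ∀ n, ∑ k ∈ Finset.Icc 1 n, t k ≤ K)
    (hw : AntitoneOn w (Ici 1)) (hw0 : ∀ k, 0 ≤ w k) (n : ℕ) :
    ∑ k ∈ Finset.Icc 1 n, t k * w k ≤ K * w 1 := by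
  have hK : 0 ≤ K := by simpa using ht 0
  have key : ∀ n ≥ 1, ∑ k ∈ Finset.Icc 1 n, t k * w k ≤
      (∑ k ∈ Finset.Icc 1 n, t k - K) * w n + K * w 1 := by
    intro n hn
    induction n, hn using Nat.le_induction with
    | base => simp [sub_mul]
    | succ n hn ih =>
      have hmono := mul_le_mul_of_nonpos_left (hw hn (by simp) n.le_succ) (sub_nonpos.2 (ht n))
      rw [Finset.sum_Icc_succ_top (by lia), Finset.sum_Icc_succ_top (by lia)]
      linarith
  rcases n.eq_zero_or_pos with rfl | hn
  · simpa using mul_nonneg hK (hw0 1)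
  · linarith [key n hn, mul_nonneg (sub_nonneg.2 (ht n)) (hw0 n)]

lemma antitoneOn_inv_natCast_rpow {a : ℝ} (ha : 0 ≤ a) :
    AntitoneOn (fun k : ℕ => ((k : ℝ) ^ a)⁻¹) (Ici 1) := by
  intro i hi j _ hij
  have : (0 : ℝ) < i := Nat.cast_pos.2 hi
  dsimp only
  gcongr

lemma dirichletSum_le_of_sum_Icc_le {f : ℕ → ℝ} {r s K : ℝ} (hs : s ≠ 0) (hrs : r ≤ s)
    (hf : Summable fun n : ℕ => f n / (n : ℝ) ^ s)
    (hK : ∀ n : ℕ, ∑ k ∈ Finset.Icc 1 n, f k / (k : ℝ) ^ r ≤ K) : dirichletSum f s ≤ K := by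
  refine le_of_tendsto' (tendsto_sum_Icc_dirichletSum hs hf) fun n => ?_
  calc ∑ k ∈ Finset.Icc 1 n, f k / (k : ℝ) ^ s
      = ∑ k ∈ Finset.Icc 1 n, f k / (k : ℝ) ^ r * ((k : ℝ) ^ (s - r))⁻¹ := by
        refine Finset.sum_congr rfl fun k hk => ?_
        have hk0 : (0 : ℝ) < k := Nat.cast_pos.2 (Finset.mem_Icc.1 hk).1
        rw [← div_eq_mul_inv, div_div, ← Real.rpow_add hk0, add_sub_cancel]
    _ ≤ K * (((1 : ℕ) : ℝ) ^ (s - r))⁻¹ := sum_Icc_mul_le_of_antitoneOn hK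
        (antitoneOn_inv_natCast_rpow (sub_nonneg.2 hrs)) (fun k => by positivity) n
    _ = K := by simp

lemma dirichletSum_le_mul_dirichletSum_one {f : ℕ → ℝ} {d K t : ℝ}
    (hf : ∀ m n, m ∣ n → f m ≤ f n)
    (hsum : ∀ s : ℝ, 1 < s → Summable fun n : ℕ => f n / (n : ℝ) ^ s)
    (hK : ∀ n, ∑ k ∈ Finset.Icc 1 n, (f k - d) ≤ K) (ht : 1 < t) :
    dirichletSum f t ≤ d * dirichletSum 1 t := by
  have hlim : Tendsto (fun s => (d + K / dirichletSum 1 s) * dirichletSum 1 t) (𝓝[>] 1)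
      (𝓝 (d * dirichletSum 1 t)) := by
    simpa using ((tendsto_dirichletSum_one_atTop.const_div_atTop K).const_add d).mul_const
      (dirichletSum 1 t)
  refine ge_of_tendsto hlim ?_
  filter_upwards [Ioo_mem_nhdsGT ht, tendsto_dirichletSum_one_atTop.eventually_gt_atTop 0]
    with s ⟨hs, hst⟩ hpos
  have hs_le : dirichletSum f s - d * dirichletSum 1 s ≤ K := by
    rw [← dirichletSum_const, ← dirichletSum_sub (hsum s hs) (summable_const_div_rpow d hs)]
    refine dirichletSum_le_of_sum_Icc_le (r := 0) (by linarith) (by linarith) ?_ (by simpa using hK)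
    simpa only [Pi.sub_apply, sub_div] using (hsum s hs).sub (summable_const_div_rpow d hs)
  have hmono := dirichletSum_mul_dirichletSum_one_le hf hs hst.le (hsum s hs)
  have ht0 := dirichletSum_nonneg (f := 1) (fun _ => zero_le_one) t
  refine le_of_mul_le_mul_right (hmono.trans ?_) hpos
  calc dirichletSum f s * dirichletSum 1 t
      ≤ (d * dirichletSum 1 s + K) * dirichletSum 1 t := by gcongr; linarith
    _ = (d + K / dirichletSum 1 s) * dirichletSum 1 t * dirichletSum 1 s := by field_simp

end DirichletSum

section LogAverage

/-- The logarithmically weighted averages of a real sequence; the value is `0` for `n ≤ 1`, since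
then `(log n)⁻¹ = 0`. -/
def logAverage (f : ℕ → ℝ) (n : ℕ) : ℝ := (Real.log n)⁻¹ * ∑ k ∈ Finset.Icc 1 n, f k / k

lemma logAverage_sub (f g : ℕ → ℝ) (n : ℕ) :
    logAverage (f - g) n = logAverage f n - logAverage g n := by
  simp only [logAverage, Pi.sub_apply, sub_div, Finset.sum_sub_distrib, mul_sub]

lemma logAverage_mono {f g : ℕ → ℝ} (hfg : f ≤ g) (n : ℕ) : logAverage f n ≤ logAverage g n := by
  have := Real.log_natCast_nonneg n
  unfold logAverage
  gcongr with k
  exact hfg k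

lemma tendsto_log_natCast_atTop : Tendsto (fun n : ℕ => Real.log n) atTop atTop :=
  Real.tendsto_log_atTop.comp tendsto_natCast_atTop_atTop

lemma tendsto_logAverage_const (c : ℝ) : Tendsto (logAverage fun _ => c) atTop (𝓝 c) := by
  have hlim := ((Real.tendsto_harmonic_sub_log.div_atTop tendsto_log_natCast_atTop).const_add
    1).const_mul c
  rw [add_zero, mul_one] at hlim
  refine hlim.congr' ?_
  filter_upwards [tendsto_log_natCast_atTop.eventually_gt_atTop 0] with n hn
  simp only [logAverage, div_eq_mul_inv c, ← Finset.mul_sum, harmonic_eq_sum_Icc]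
  push_cast
  field_simp
  ring

lemma tendsto_logAverage_zero_of_abs_sum_Icc_le {f : ℕ → ℝ} {K : ℝ}
    (hK : ∀ n, |∑ k ∈ Finset.Icc 1 n, f k| ≤ K) : Tendsto (logAverage f) atTop (𝓝 0) := by
  have hanti : AntitoneOn (fun k : ℕ => (k : ℝ)⁻¹) (Ici 1) := by
    simpa using antitoneOn_inv_natCast_rpow zero_le_one
  have hbound : ∀ n, |∑ k ∈ Finset.Icc 1 n, f k / k| ≤ K := fun n => by
    have hle := sum_Icc_mul_le_of_antitoneOn (t := f) (fun n => (abs_le'.1 (hK n)).1) hanti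
      (fun k => by positivity) n
    have hge := sum_Icc_mul_le_of_antitoneOn (t := -f)
      (fun n => by simpa using (abs_le'.1 (hK n)).2) hanti (fun k => by positivity) n
    refine abs_le'.2 ⟨?_, ?_⟩
    · simpa [div_eq_mul_inv] using hle
    · simpa [div_eq_mul_inv] using hge
  refine squeeze_zero_norm (fun n => ?_)
    ((mul_zero K) ▸ tendsto_log_natCast_atTop.inv_tendsto_atTop.const_mul K)
  rw [logAverage, norm_mul, norm_inv, Real.norm_of_nonneg (Real.log_natCast_nonneg n), mul_comm]
  exact mul_le_mul_of_nonneg_right (hbound n) (inv_nonneg.2 (Real.log_natCast_nonneg n))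

lemma tendsto_logAverage_of_abs_sum_Icc_sub_le {f : ℕ → ℝ} {d K : ℝ}
    (hK : ∀ n, |∑ k ∈ Finset.Icc 1 n, (f k - d)| ≤ K) : Tendsto (logAverage f) atTop (𝓝 d) := by
  have hlim := (tendsto_logAverage_zero_of_abs_sum_Icc_le hK).add (tendsto_logAverage_const d)
  rw [zero_add] at hlim
  refine hlim.congr fun n => ?_
  rw [← sub_add_cancel (logAverage f n) (logAverage (fun _ => d) n), ← logAverage_sub]
  rfl

lemma exists_dirichletSum_ge_of_eventually_lt_logAverage {f : ℕ → ℝ} {c c' : ℝ} (hc : c < c')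
    (hsum : ∀ s : ℝ, 1 < s → Summable fun n : ℕ => f n / (n : ℝ) ^ s)
    (hf : ∀ᶠ n in atTop, c' < logAverage f n) :
    ∃ K, ∀ s : ℝ, 1 < s → c * dirichletSum 1 s - K ≤ dirichletSum f s := by
  have hev : ∀ᶠ n in atTop, ∑ k ∈ Finset.Icc 1 n, (c - f k) / (k : ℝ) ^ (1 : ℝ) ≤ 0 := by
    filter_upwards [hf, (tendsto_logAverage_const c).eventually_lt_const hc,
      tendsto_log_natCast_atTop.eventually_gt_atTop 0] with n hn hcn hlog
    have hneg : logAverage ((fun _ => c) - f) n < 0 := by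
      rw [logAverage_sub]; linarith
    simpa using (neg_of_mul_neg_right hneg (inv_nonneg.2 hlog.le)).le
  obtain ⟨K, hK⟩ := (isBoundedUnder_of_eventually_le hev).bddAbove_range
  refine ⟨K, fun s hs => ?_⟩
  have hle : dirichletSum ((fun _ => c) - f) s ≤ K :=
    dirichletSum_le_of_sum_Icc_le (by linarith) hs.le
      (by simpa only [Pi.sub_apply, sub_div] using (summable_const_div_rpow c hs).sub (hsum s hs))
      (fun n => hK (mem_range_self n))
  rw [dirichletSum_sub (summable_const_div_rpow c hs) (hsum s hs), dirichletSum_const] at hle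
  linarith

lemma isBoundedUnder_ge_logAverage {f : ℕ → ℝ} {C : ℝ} (hf : ∀ n, C ≤ f n) :
    IsBoundedUnder (· ≥ ·) atTop (logAverage f) :=
  (tendsto_logAverage_const C).isBoundedUnder_ge.mono_ge
    (.of_forall (logAverage_mono hf))

lemma isBoundedUnder_le_logAverage {f : ℕ → ℝ} {C : ℝ} (hf : ∀ n, f n ≤ C) :
    IsBoundedUnder (· ≤ ·) atTop (logAverage f) :=
  (tendsto_logAverage_const C).isBoundedUnder_le.mono_le
    (.of_forall (logAverage_mono hf))

lemma liminf_logAverage_le_of_dirichletSum_le {f : ℕ → ℝ} {C a : ℝ} (hC : ∀ n, C ≤ f n)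
    (hsum : ∀ s : ℝ, 1 < s → Summable fun n : ℕ => f n / (n : ℝ) ^ s)
    (hle : ∀ s : ℝ, 1 < s → dirichletSum f s ≤ a * dirichletSum 1 s) :
    liminf (logAverage f) atTop ≤ a := by
  by_contra! ha
  obtain ⟨c', hac', hc'⟩ := exists_between ha
  obtain ⟨c, hac, hcc'⟩ := exists_between hac'
  obtain ⟨K, hK⟩ := exists_dirichletSum_ge_of_eventually_lt_logAverage hcc' hsum
    (eventually_lt_of_lt_liminf hc' (isBoundedUnder_ge_logAverage hC))
  obtain ⟨s, hs, hlarge⟩ := (eventually_mem_nhdsWithin.and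
    ((tendsto_dirichletSum_one_atTop.const_mul_atTop (sub_pos.2 hac)).eventually_gt_atTop K)).exists
  linarith [hK s hs, hle s hs]

end LogAverage

section Periodic

lemma exists_abs_sum_range_le_of_periodic {M : Type*} [AddCommGroup M] [LinearOrder M]
    [IsOrderedAddMonoid M] {g : ℕ → M} {L : ℕ} (hL : 0 < L)
    (hg : Function.Periodic g L) (hsum : ∑ k ∈ Finset.range L, g k = 0) :
    ∃ K, ∀ n, |∑ k ∈ Finset.range n, g k| ≤ K := by
  have hper : Function.Periodic (fun n => |∑ k ∈ Finset.range n, g k|) L := fun n => by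
    dsimp only
    rw [add_comm, Finset.sum_range_add, hsum, zero_add]
    simp only [add_comm L, hg _]
  refine ⟨∑ m ∈ Finset.range L, |∑ k ∈ Finset.range m, g k|, fun n => ?_⟩
  rw [← hper.map_mod_nat n]
  exact Finset.single_le_sum (f := fun m => |∑ k ∈ Finset.range m, g k|)
    (fun m _ => abs_nonneg _) (Finset.mem_range.2 (n.mod_lt hL))

lemma exists_abs_sum_Icc_sub_le_of_periodic {f : ℕ → ℝ} {L : ℕ} (hL : 0 < L)
    (hf : Function.Periodic f L) :
    ∃ K, ∀ n, |∑ k ∈ Finset.Icc 1 n, (f k - (∑ j ∈ Finset.range L, f j) / L)| ≤ K := by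
  set d := (∑ j ∈ Finset.range L, f j) / L with hd
  obtain ⟨K, hK⟩ := exists_abs_sum_range_le_of_periodic (g := fun k => f k - d) hL
    (fun k => by simp only [hf k]) (by
      rw [Finset.sum_sub_distrib, Finset.sum_const, Finset.card_range, nsmul_eq_mul, hd,
        mul_div_cancel₀ _ (by positivity), sub_self])
  refine ⟨K + |f 0 - d|, fun n => ?_⟩
  calc |∑ k ∈ Finset.Icc 1 n, (f k - d)|
      = |∑ k ∈ Finset.range (n + 1), (f k - d) - (f 0 - d)| := by
        rw [Finset.range_eq_Ico, Finset.sum_eq_sum_Ico_succ_bot (Nat.add_one_pos n),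
          add_sub_cancel_left, zero_add, Finset.Ico_add_one_right_eq_Icc]
    _ ≤ K + |f 0 - d| := (abs_sub _ _).trans (by gcongr; exact hK _)

lemma sum_range_add_eq_of_periodic {M : Type*} [AddCancelCommMonoid M] {f : ℤ → M} {L : ℕ}
    (hf : Function.Periodic f L) (n : ℤ) :
    ∑ j ∈ Finset.range L, f (n + j) = ∑ j ∈ Finset.range L, f j := by
  have hone : Function.Periodic (fun n : ℤ => ∑ j ∈ Finset.range L, f (n + j)) 1 := fun n => by
    refine add_right_cancel (b := f n) ?_
    have hshift := (Finset.sum_range_succ' (fun j : ℕ => f (n + j)) L).symm.trans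
      (Finset.sum_range_succ (fun j : ℕ => f (n + j)) L)
    simpa [hf n, add_assoc, add_comm (1 : ℤ)] using hshift
  simpa using hone.int_mul_eq n

end Periodic

section Multiples

/-- The indicator function of `A ⊆ ℤ`, restricted to the natural numbers and with real values:
the coefficient sequence in the logarithmic averages and the Dirichlet series attached to `A`. -/
def natIndicator (A : Set ℤ) (n : ℕ) : ℝ := A.indicator 1 (n : ℤ)

lemma natIndicator_nonneg (A : Set ℤ) (n : ℕ) : 0 ≤ natIndicator A n :=
  indicator_nonneg (fun _ _ => zero_le_one) _

lemma natIndicator_le_one (A : Set ℤ) (n : ℕ) : natIndicator A n ≤ 1 :=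
  indicator_le_self' (fun _ _ => zero_le_one) _

lemma natIndicator_mono {A A' : Set ℤ} (h : A ⊆ A') : natIndicator A ≤ natIndicator A' :=
  fun _ => indicator_le_indicator_of_subset h (fun _ => zero_le_one) _

lemma abs_natIndicator_le_one (A : Set ℤ) (n : ℕ) : |natIndicator A n| ≤ 1 :=
  (abs_of_nonneg (natIndicator_nonneg A n)).trans_le (natIndicator_le_one A n)

lemma summable_natIndicator_div_rpow (A : Set ℤ) (s : ℝ) (hs : 1 < s) :
    Summable fun n : ℕ => natIndicator A n / (n : ℝ) ^ s :=
  summable_div_rpow_of_abs_le (abs_natIndicator_le_one A) hs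

lemma logWeight_eq_logAverage (A : Set ℤ) : logWeight A = logAverage (natIndicator A) := by
  ext n
  simp [logWeight, logAverage, natIndicator, indicator_apply, ite_div]

lemma logDensLow_mono {A A' : Set ℤ} (h : A ⊆ A') : logDensLow A ≤ logDensLow A' := by
  simp only [logDensLow, logWeight_eq_logAverage]
  exact liminf_le_liminf (.of_forall (logAverage_mono (natIndicator_mono h)))
    (isBoundedUnder_ge_logAverage (natIndicator_nonneg A))
    (isBoundedUnder_le_logAverage (natIndicator_le_one A')).isCoboundedUnder_ge

lemma multiplesZ_mono {S T : Set ℕ} (h : S ⊆ T) : multiplesZ S ⊆ multiplesZ T :=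
  fun _ ⟨b, hb, hdvd⟩ => ⟨b, h hb, hdvd⟩

lemma natIndicator_multiplesZ_le_of_dvd (S : Set ℕ) (m n : ℕ) (hmn : m ∣ n) :
    natIndicator (multiplesZ S) m ≤ natIndicator (multiplesZ S) n := by
  by_cases hm : (m : ℤ) ∈ multiplesZ S
  · obtain ⟨b, hb, hbm⟩ := hm
    have hn : (n : ℤ) ∈ multiplesZ S := ⟨b, hb, hbm.trans (Int.natCast_dvd_natCast.2 hmn)⟩
    exact (natIndicator_le_one _ m).trans_eq (indicator_of_mem (f := 1) hn).symm
  · exact (indicator_of_notMem hm _).trans_le (natIndicator_nonneg _ n)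

lemma exists_pos_forall_dvd_of_finite {S : Set ℕ} (hS : S.Finite) (h0 : 0 ∉ S) :
    ∃ L > 0, ∀ b ∈ S, b ∣ L :=
  ⟨∏ b ∈ hS.toFinset, b,
    Finset.prod_pos fun _ hb => Nat.pos_of_ne_zero (ne_of_mem_of_not_mem (hS.mem_toFinset.1 hb) h0),
    fun _ hb => Finset.dvd_prod_of_mem _ (hS.mem_toFinset.2 hb)⟩

variable {S : Set ℕ} {L : ℕ}

lemma periodic_indicator_multiplesZ (hS : ∀ b ∈ S, b ∣ L) :
    Function.Periodic ((multiplesZ S).indicator (1 : ℤ → ℝ)) L := fun n => by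
  have hmem : n + L ∈ multiplesZ S ↔ n ∈ multiplesZ S :=
    exists_congr fun b => and_congr_right fun hb =>
      dvd_add_left (Int.natCast_dvd_natCast.2 (hS b hb))
  simp only [indicator_apply, hmem, Pi.one_apply]

lemma exists_abs_sum_Icc_natIndicator_multiplesZ_sub_le (hL : 0 < L) (hS : ∀ b ∈ S, b ∣ L) :
    ∃ K, ∀ n, |∑ k ∈ Finset.Icc 1 n, (natIndicator (multiplesZ S) k -
      (∑ j ∈ Finset.range L, natIndicator (multiplesZ S) j) / L)| ≤ K :=
  exists_abs_sum_Icc_sub_le_of_periodic hL fun n => by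
    simpa [natIndicator] using periodic_indicator_multiplesZ hS n

lemma hasLogDensity_multiplesZ (hL : 0 < L) (hS : ∀ b ∈ S, b ∣ L) :
    HasLogDensity (multiplesZ S) ((∑ j ∈ Finset.range L, natIndicator (multiplesZ S) j) / L) := by
  obtain ⟨K, hK⟩ := exists_abs_sum_Icc_natIndicator_multiplesZ_sub_le hL hS
  rw [HasLogDensity, logWeight_eq_logAverage]
  exact tendsto_logAverage_of_abs_sum_Icc_sub_le hK

lemma logDensLow_multiplesZ (hL : 0 < L) (hS : ∀ b ∈ S, b ∣ L) :
    logDensLow (multiplesZ S) = (∑ j ∈ Finset.range L, natIndicator (multiplesZ S) j) / L :=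
  (hasLogDensity_multiplesZ hL hS).liminf_eq

lemma dirichletSum_multiplesZ_le_of_finite (hS : S.Finite) (h0 : 0 ∉ S) {s : ℝ} (hs : 1 < s) :
    dirichletSum (natIndicator (multiplesZ S)) s ≤
      logDensLow (multiplesZ S) * dirichletSum 1 s := by
  obtain ⟨L, hL, hdvd⟩ := exists_pos_forall_dvd_of_finite hS h0
  obtain ⟨K, hK⟩ := exists_abs_sum_Icc_natIndicator_multiplesZ_sub_le hL hdvd
  rw [logDensLow_multiplesZ hL hdvd]
  exact dirichletSum_le_mul_dirichletSum_one (natIndicator_multiplesZ_le_of_dvd S)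
    (summable_natIndicator_div_rpow _) (fun n => (abs_le.1 (hK n)).2) hs

variable (S) in
lemma tendsto_natIndicator_multiplesZ_inter_Iic (n : ℕ) :
    Tendsto (fun N => natIndicator (multiplesZ (S ∩ Iic N)) n) atTop
      (𝓝 (natIndicator (multiplesZ S) n)) := by
  by_cases hn : (n : ℤ) ∈ multiplesZ S
  · obtain ⟨b, hb, hbn⟩ := hn
    have hmem : ∀ T : Set ℕ, b ∈ T → natIndicator (multiplesZ T) n = 1 := fun T hT =>
      indicator_of_mem (show (n : ℤ) ∈ multiplesZ T from ⟨b, hT, hbn⟩) _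
    rw [hmem S hb]
    exact tendsto_const_nhds.congr' ((eventually_ge_atTop b).mono fun N hN =>
      (hmem (S ∩ Iic N) ⟨hb, hN⟩).symm)
  · have hn' : ∀ N, (n : ℤ) ∉ multiplesZ (S ∩ Iic N) := fun N =>
      notMem_subset (multiplesZ_mono inter_subset_left) hn
    simp [natIndicator, hn, hn']

variable (S) in
lemma tendsto_dirichletSum_multiplesZ_inter_Iic {s : ℝ} (hs : 1 < s) :
    Tendsto (fun N => dirichletSum (natIndicator (multiplesZ (S ∩ Iic N))) s) atTop
      (𝓝 (dirichletSum (natIndicator (multiplesZ S)) s)) := by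
  refine tendsto_tsum_of_dominated_convergence (summable_one_div_rpow hs)
    (fun n => (tendsto_natIndicator_multiplesZ_inter_Iic S n).div_const _)
    (.of_forall fun N n => ?_)
  rw [norm_div, Real.norm_eq_abs, Real.norm_of_nonneg (Real.rpow_nonneg n.cast_nonneg s)]
  gcongr
  exact abs_natIndicator_le_one _ n

theorem tendsto_logDensLow_multiplesZ_inter_Iic (h0 : 0 ∉ S) :
    Tendsto (fun N => logDensLow (multiplesZ (S ∩ Iic N))) atTop
      (𝓝 (logDensLow (multiplesZ S))) := by
  have hle : ∀ N, logDensLow (multiplesZ (S ∩ Iic N)) ≤ logDensLow (multiplesZ S) := fun N =>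
    logDensLow_mono (multiplesZ_mono inter_subset_left)
  have hbdd : BddAbove (range fun N => logDensLow (multiplesZ (S ∩ Iic N))) :=
    ⟨_, forall_mem_range.2 hle⟩
  have hmono : Monotone fun N => logDensLow (multiplesZ (S ∩ Iic N)) := fun _ _ hMN =>
    logDensLow_mono (multiplesZ_mono (inter_subset_inter_right S (Iic_subset_Iic.2 hMN)))
  suffices logDensLow (multiplesZ S) ≤ ⨆ N, logDensLow (multiplesZ (S ∩ Iic N)) from
    this.antisymm (ciSup_le hle) ▸ tendsto_atTop_ciSup hmono hbdd
  rw [logDensLow, logWeight_eq_logAverage]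
  refine liminf_logAverage_le_of_dirichletSum_le (natIndicator_nonneg _)
    (summable_natIndicator_div_rpow _) fun s hs =>
      le_of_tendsto' (tendsto_dirichletSum_multiplesZ_inter_Iic S hs) fun N => ?_
  refine (dirichletSum_multiplesZ_le_of_finite ((finite_Iic N).inter_of_right S)
    (fun h => h0 h.1) hs).trans ?_
  exact mul_le_mul_of_nonneg_right (le_ciSup hbdd N) (dirichletSum_nonneg (fun _ => zero_le_one) s)

end Multiples

lemma card_mul_measureReal_eq_of_sum_indicator_add {G ι : Type*} [AddGroup G] [MeasurableSpace G]
    [MeasurableAdd G] {μ : Measure G} [IsProbabilityMeasure μ] [μ.IsAddRightInvariant]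
    {V : Set G} (hV : MeasurableSet V) {s : Finset ι} {g : ι → G} {c : ℝ}
    (h : ∀ x, ∑ i ∈ s, V.indicator (1 : G → ℝ) (x + g i) = c) : s.card * μ.real V = c := by
  have hint : Integrable (V.indicator (1 : G → ℝ)) μ := (integrable_const 1).indicator hV
  calc s.card * μ.real V = ∑ i ∈ s, ∫ x, V.indicator (1 : G → ℝ) (x + g i) ∂μ := by
        simp [integral_add_right_eq_self (V.indicator (1 : G → ℝ)), integral_indicator_one hV]
    _ = ∫ x, ∑ i ∈ s, V.indicator (1 : G → ℝ) (x + g i) ∂μ :=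
        (integral_finsetSum s fun i _ => hint.comp_add_right (g i)).symm
    _ = c := by simp [h]

section Window

variable {B S : Set ℕ}

variable (B) in
/-- The diagonal embedding `Δ`, with values in the subgroup `H`. -/
def diagH (n : ℤ) : Hgrp B := ⟨diagEmb B n, subset_closure ⟨n, rfl⟩⟩

lemma exists_intCast_eq_of_finite (hS : S.Finite) (h : Hgrp B) :
    ∃ n : ℤ, ∀ b : B, (b : ℕ) ∈ S → (h : (b : B) → ZMod b) b = n := by
  have hopen : IsOpen ({b : B | (b : ℕ) ∈ S}.pi fun b => {(h : (b : B) → ZMod b) b}) :=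
    isOpen_set_pi (hS.preimage Subtype.val_injective.injOn) fun _ _ => isOpen_discrete _
  obtain ⟨_, hx, n, rfl⟩ := mem_closure_iff.1 h.2 _ hopen fun _ _ => rfl
  exact ⟨n, fun b hb => (hx b hb).symm⟩

lemma add_diagH_mem_compl_Wset_iff (hSB : S ⊆ B) {h : Hgrp B} {n : ℤ}
    (hn : ∀ b : B, (b : ℕ) ∈ S → (h : (b : B) → ZMod b) b = n) (m : ℤ) :
    h + diagH B m ∈ (Wset B S)ᶜ ↔ n + m ∈ multiplesZ S := by
  have hcoord : ∀ b : B, (b : ℕ) ∈ S →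
      (((h + diagH B m : Hgrp B) : (b : B) → ZMod b) b = 0 ↔ ((b : ℕ) : ℤ) ∣ n + m) := by
    intro b hb
    rw [← ZMod.intCast_zmod_eq_zero_iff_dvd, Int.cast_add, ← hn b hb]
    rfl
  simp only [Wset, mem_compl_iff, mem_ofPred_eq, not_forall, not_not]
  exact ⟨fun ⟨b, hb, hz⟩ => ⟨b, hb, (hcoord b hb).1 hz⟩,
    fun ⟨b, hb, hdvd⟩ => ⟨⟨b, hSB hb⟩, hb, (hcoord _ hb).2 hdvd⟩⟩

variable (B S) in
lemma isClosed_Wset : IsClosed (Wset B S) := by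
  simp only [Wset, ofPred_forall]
  exact isClosed_iInter fun b => isClosed_iInter fun _ =>
    (isClosed_discrete {0}ᶜ).preimage ((continuous_apply b).comp continuous_subtype_val)

variable (B) in
lemma antitone_Wset : Antitone (Wset B) := fun _ _ hST _ hh b hb => hh b (hST hb)

variable (B S) in
lemma iInter_Wset_inter_Iic : ⋂ N, Wset B (S ∩ Iic N) = Wset B S :=
  Subset.antisymm (fun _ hh b hb => mem_iInter.1 hh b b ⟨hb, mem_Iic.2 le_rfl⟩)
    (subset_iInter fun _ => antitone_Wset B inter_subset_left)

variable [∀ b : B, NeZero (b : ℕ)]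

instance : IsProbabilityMeasure (mH B) := ⟨Measure.addHaarMeasure_self⟩

instance : (mH B).IsAddLeftInvariant :=
  inferInstanceAs (Measure.addHaarMeasure ⊤).IsAddLeftInvariant

variable (B S) in
lemma tendsto_measureReal_Wset_inter_Iic :
    Tendsto (fun N => (mH B).real (Wset B (S ∩ Iic N))) atTop (𝓝 ((mH B).real (Wset B S))) := by
  have hlim := tendsto_measure_iInter_atTop (μ := mH B) (s := fun N : ℕ => Wset B (S ∩ Iic N))
    (fun _ => (isClosed_Wset B _).measurableSet.nullMeasurableSet)
    (fun _ _ hMN => antitone_Wset B (inter_subset_inter_right S (Iic_subset_Iic.2 hMN)))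
    ⟨0, measure_ne_top _ _⟩
  rw [iInter_Wset_inter_Iic] at hlim
  exact (ENNReal.tendsto_toReal (measure_ne_top _ _)).comp hlim

lemma measureReal_Wset_of_finite (hS : S.Finite) (hSB : S ⊆ B) :
    (mH B).real (Wset B S) = 1 - logDensLow (multiplesZ S) := by
  obtain ⟨L, hL, hdvd⟩ := exists_pos_forall_dvd_of_finite hS fun h0 =>
    NeZero.ne ((⟨0, hSB h0⟩ : B) : ℕ) rfl
  have htranslates : ∀ h : Hgrp B,
      ∑ j ∈ Finset.range L, (Wset B S)ᶜ.indicator (1 : Hgrp B → ℝ) (h + diagH B j) =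
        ∑ j ∈ Finset.range L, natIndicator (multiplesZ S) j := fun h => by
    obtain ⟨n, hn⟩ := exists_intCast_eq_of_finite hS h
    refine .trans ?_ (sum_range_add_eq_of_periodic (periodic_indicator_multiplesZ hdvd) n)
    simp only [indicator_apply, add_diagH_mem_compl_Wset_iff hSB hn, Pi.one_apply]
  have hW := (isClosed_Wset B S).measurableSet
  have hcompl := card_mul_measureReal_eq_of_sum_indicator_add (μ := mH B) hW.compl htranslates
  rw [Finset.card_range] at hcompl
  rw [logDensLow_multiplesZ hL hdvd, ← hcompl, mul_div_cancel_left₀ _ (by positivity),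
    probReal_compl_eq_one_sub hW, sub_sub_cancel]

end Window

theorem haar_window_eq_one_sub_logDensity_general (B : Set ℕ) [∀ b : B, NeZero (b : ℕ)]
    (B' : Set ℕ) (hB'B : B' ⊆ B) :
    (mH B (Wset B B')).toReal = 1 - logDensLow (multiplesZ B') := by
  have h0 : 0 ∉ B' := fun h => NeZero.ne ((⟨0, hB'B h⟩ : B) : ℕ) rfl
  have hfinite : ∀ N, (mH B).real (Wset B (B' ∩ Iic N)) =
      1 - logDensLow (multiplesZ (B' ∩ Iic N)) := fun N =>
    measureReal_Wset_of_finite ((finite_Iic N).inter_of_right B') (inter_subset_left.trans hB'B)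
  refine tendsto_nhds_unique (tendsto_measureReal_Wset_inter_Iic B B') ?_
  simpa only [hfinite] using (tendsto_logDensLow_multiplesZ_inter_Iic h0).const_sub 1

/-- For `B' ⊆ B` one has `m_H(W_{B'}) = 1 − δ(M_{B'})`. -/
theorem haar_window_eq_one_sub_logDensity (B : Set ℕ) [∀ b : B, NeZero (b : ℕ)]
    (hprim : Primitive B) (B' : Set ℕ) (hB'B : B' ⊆ B) :
    (mH B (Wset B B')).toReal = 1 - logDensLow (multiplesZ B') :=
  haar_window_eq_one_sub_logDensity_general B B' hB'B
end
end

section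
/- Let ℬ ⊆ ℕ be a primitive set and for N ∈ ℕ let ℬ^(N) := {b ∈ ℬ : every prime factor of b is ≤ N} and ℬ̃^(N) := {b ∈ ℬ : b has no prime factor ≤ N}. Then for every N ∈ ℕ, δ(M_{ℬ̃^(N)}) = δ(M_{ℬ̃^(N)} ∖ M_{ℬ^(N)}) + δ(M_{ℬ̃^(N)})·δ(M_{ℬ^(N)}). -/
open Filter Set Topology MeasureTheory

open scoped Classical

noncomputable section

/-!
Fix a finite set `s` of primes. Every positive integer factors uniquely as `u * v` with `u`
composed of primes of `s` and `v` free of them. If `D` depends only on `u` and `A` only on `v`,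
then, with `R` the set of possible `v`,
`∑_{k ≤ n, k ∈ A ∩ D} 1/k = ∑_{u ∈ D} (1/u) ∑_{v ≤ n/u, v ∈ A ∩ R} 1/v`.
For fixed `u` the inner sum differs from the one over `v ≤ n` by `O(1)`, and `∑ 1/u` converges by
the Euler product, so dominated convergence gives `(∑_{u ∈ D} 1/u) * ∑_{v ≤ n, v ∈ A ∩ R} 1/v` up
to `o(log n)`. Dividing by the case `D = ℤ`, one sees that `D` has a logarithmic density and is
independent of `A`. The multiples of `B^(N)` and of `B̃^(N)` are such sets `D` and `A` for `s` the
primes up to `N`.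
-/

section Liminf

variable {ι : Type*} {f : Filter ι} [f.NeBot] {u v : ι → ℝ}

theorem liminf_eq_of_tendsto_sub_zero (hv : f.IsBoundedUnder (· ≤ ·) v)
    (hv' : f.IsBoundedUnder (· ≥ ·) v) (h : Tendsto (fun i => u i - v i) f (𝓝 0)) :
    liminf u f = liminf v f := by
  have hu : (fun i => u i - v i) + v = u := by ext; simp
  have lower := le_liminf_add h.isBoundedUnder_ge h.isBoundedUnder_le hv' hv.isCoboundedUnder_ge
  have upper := liminf_add_le h.isBoundedUnder_ge h.isBoundedUnder_le hv' hv.isCoboundedUnder_ge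
  rw [hu, h.liminf_eq, zero_add] at lower
  rw [hu, h.limsup_eq, zero_add] at upper
  exact le_antisymm upper lower

theorem liminf_const_mul_of_nonneg {c : ℝ} (hc : 0 ≤ c) (hv : f.IsBoundedUnder (· ≤ ·) v)
    (hv' : f.IsBoundedUnder (· ≥ ·) v) :
    liminf (fun i => c * v i) f = c * liminf v f :=
  ((monotone_mul_left_of_nonneg hc).map_liminf_of_continuousAt v (by fun_prop)
    hv.isCoboundedUnder_ge hv').symm

end Liminf

section LogSum

variable {A A' : Set ℤ}

/-- The logarithmic counting function `∑_{k ≤ n, k ∈ A} 1/k`, the unnormalised `logWeight`. -/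
def logSum (A : Set ℤ) (n : ℕ) : ℝ :=
  ∑ k ∈ Finset.Icc 1 n, A.indicator (fun m : ℤ => (m : ℝ)⁻¹) (k : ℤ)

theorem logWeight_eq_inv_log_mul_logSum (A : Set ℤ) (n : ℕ) :
    logWeight A n = (Real.log n)⁻¹ * logSum A n := rfl

theorem inv_log_natCast_nonneg (n : ℕ) : 0 ≤ (Real.log n)⁻¹ :=
  inv_nonneg.2 (Real.log_natCast_nonneg n)

theorem indicator_inv_natCast_nonneg (A : Set ℤ) (k : ℕ) :
    0 ≤ A.indicator (fun m : ℤ => (m : ℝ)⁻¹) (k : ℤ) :=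
  indicator_apply_nonneg fun _ => by positivity

@[simp]
theorem logSum_zero (A : Set ℤ) : logSum A 0 = 0 := by simp [logSum]

theorem logSum_nonneg (A : Set ℤ) (n : ℕ) : 0 ≤ logSum A n :=
  Finset.sum_nonneg fun k _ => indicator_inv_natCast_nonneg A k

theorem logSum_mono (A : Set ℤ) : Monotone (logSum A) := fun _ _ hmn =>
  Finset.sum_le_sum_of_subset_of_nonneg (Finset.Icc_subset_Icc_right hmn)
    fun k _ _ => indicator_inv_natCast_nonneg A k

theorem logSum_le_logSum_of_subset (h : A ⊆ A') (n : ℕ) : logSum A n ≤ logSum A' n :=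
  Finset.sum_le_sum fun _ _ => indicator_le_indicator_apply_of_subset h (by positivity)

theorem logSum_univ (n : ℕ) : logSum univ n = (harmonic n : ℝ) := by
  simp [logSum, harmonic_eq_sum_Icc]

theorem logSum_sdiff (A A' : Set ℤ) (n : ℕ) :
    logSum (A \ A') n = logSum A n - logSum (A ∩ A') n := by
  rw [logSum, logSum, logSum, ← Finset.sum_sub_distrib]
  refine Finset.sum_congr rfl fun k _ => ?_
  by_cases hk : (k : ℤ) ∈ A <;> by_cases hk' : (k : ℤ) ∈ A' <;> simp [hk, hk']

theorem logSum_sub_logSum_div_le (A : Set ℤ) (n : ℕ) {m : ℕ} (hm : 0 < m) :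
    logSum A n - logSum A (n / m) ≤ m := by
  obtain rfl | hn := n.eq_zero_or_pos
  · simp
  have hsub : Finset.Icc 1 (n / m) ⊆ Finset.Icc 1 n :=
    Finset.Icc_subset_Icc_right (Nat.div_le_self n m)
  have term_le : ∀ k ∈ Finset.Icc 1 n \ Finset.Icc 1 (n / m),
      A.indicator (fun m : ℤ => (m : ℝ)⁻¹) (k : ℤ) ≤ (m : ℝ) / n := by
    intro k hk
    simp only [Finset.mem_sdiff, Finset.mem_Icc, not_and, not_le] at hk
    have hk0 : (0 : ℝ) < k := by exact_mod_cast hk.1.1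
    have hnk : (n : ℝ) ≤ k * m := by
      exact_mod_cast ((Nat.div_lt_iff_lt_mul hm).1 (hk.2 hk.1.1)).le
    refine indicator_apply_le' (fun _ => ?_) fun _ => by positivity
    rw [Int.cast_natCast, inv_le_iff_one_le_mul₀ hk0, div_mul_eq_mul_div, mul_comm,
      one_le_div (by positivity)]
    exact hnk
  calc logSum A n - logSum A (n / m)
      = ∑ k ∈ Finset.Icc 1 n \ Finset.Icc 1 (n / m),
          A.indicator (fun m : ℤ => (m : ℝ)⁻¹) (k : ℤ) :=
        (Finset.sum_sdiff_eq_sub hsub).symm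
    _ ≤ ∑ _k ∈ Finset.Icc 1 n \ Finset.Icc 1 (n / m), (m : ℝ) / n := Finset.sum_le_sum term_le
    _ ≤ ∑ _k ∈ Finset.Icc 1 n, (m : ℝ) / n :=
        Finset.sum_le_sum_of_subset_of_nonneg Finset.sdiff_subset fun _ _ _ => by positivity
    _ = m := by
        simp only [Finset.sum_const, Nat.card_Icc, Nat.add_sub_cancel, nsmul_eq_mul]
        field_simp

end LogSum

section LogWeight

theorem tendsto_inv_log_natCast : Tendsto (fun n : ℕ => (Real.log n)⁻¹) atTop (𝓝 0) :=
  (Real.tendsto_log_atTop.comp tendsto_natCast_atTop_atTop).inv_tendsto_atTop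

theorem logWeight_nonneg (A : Set ℤ) (n : ℕ) : 0 ≤ logWeight A n :=
  mul_nonneg (inv_log_natCast_nonneg n) (logSum_nonneg A n)

theorem logWeight_le_logWeight_univ (A : Set ℤ) (n : ℕ) : logWeight A n ≤ logWeight univ n :=
  mul_le_mul_of_nonneg_left (logSum_le_logSum_of_subset (subset_univ A) n)
    (inv_log_natCast_nonneg n)

theorem logWeight_sdiff (A A' : Set ℤ) (n : ℕ) :
    logWeight (A \ A') n = logWeight A n - logWeight (A ∩ A') n := by
  simp only [logWeight_eq_inv_log_mul_logSum, logSum_sdiff, mul_sub]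

theorem hasLogDensity_univ : HasLogDensity univ 1 := by
  have h : Tendsto (fun n : ℕ => (Real.log n)⁻¹ * (harmonic n - Real.log n) + 1) atTop (𝓝 1) := by
    simpa using (tendsto_inv_log_natCast.mul Real.tendsto_harmonic_sub_log).add_const 1
  refine h.congr' ?_
  filter_upwards [eventually_ge_atTop 2] with n hn
  have hlog : Real.log n ≠ 0 := (Real.log_pos (by exact_mod_cast hn)).ne'
  rw [logWeight_eq_inv_log_mul_logSum, logSum_univ, mul_sub, inv_mul_cancel₀ hlog,
    sub_add_cancel]

theorem HasLogDensity.le_one {A : Set ℤ} {d : ℝ} (h : HasLogDensity A d) : d ≤ 1 :=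
  le_of_tendsto_of_tendsto' h hasLogDensity_univ (logWeight_le_logWeight_univ A)

theorem HasLogDensity.logDensLow_eq {A : Set ℤ} {d : ℝ} (h : HasLogDensity A d) :
    logDensLow A = d :=
  h.liminf_eq

theorem isBoundedUnder_le_logWeight (A : Set ℤ) :
    IsBoundedUnder (· ≤ ·) atTop (logWeight A) :=
  hasLogDensity_univ.isBoundedUnder_le.mono_le (.of_forall (logWeight_le_logWeight_univ A))

theorem isBoundedUnder_ge_logWeight (A : Set ℤ) :
    IsBoundedUnder (· ≥ ·) atTop (logWeight A) :=
  isBoundedUnder_of ⟨0, logWeight_nonneg A⟩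

theorem tendsto_inv_log_mul_logSum_sub_logSum_div (A : Set ℤ) {m : ℕ} (hm : 0 < m) :
    Tendsto (fun n : ℕ => (Real.log n)⁻¹ * (logSum A n - logSum A (n / m))) atTop (𝓝 0) := by
  have inv_log_mul : Tendsto (fun n : ℕ => (Real.log n)⁻¹ * m) atTop (𝓝 0) := by
    simpa using tendsto_inv_log_natCast.mul_const (m : ℝ)
  refine squeeze_zero (fun n => ?_) (fun n => ?_) inv_log_mul
  · exact mul_nonneg (inv_log_natCast_nonneg n)
      (sub_nonneg.2 (logSum_mono A (Nat.div_le_self n m)))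
  · exact mul_le_mul_of_nonneg_left (logSum_sub_logSum_div_le A n hm) (inv_log_natCast_nonneg n)

theorem abs_inv_log_mul_logSum_sub_logSum_div_le (A : Set ℤ) (m n : ℕ) :
    |(Real.log n)⁻¹ * (logSum A n - logSum A (n / m))| ≤ logWeight univ n := by
  have hdiv : logSum A (n / m) ≤ logSum A n := logSum_mono A (Nat.div_le_self n m)
  rw [abs_of_nonneg (mul_nonneg (inv_log_natCast_nonneg n) (sub_nonneg.2 hdiv))]
  calc (Real.log n)⁻¹ * (logSum A n - logSum A (n / m))
      ≤ (Real.log n)⁻¹ * logSum A n :=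
        mul_le_mul_of_nonneg_left (sub_le_self _ (logSum_nonneg A _)) (inv_log_natCast_nonneg n)
    _ ≤ logWeight univ n := logWeight_le_logWeight_univ A n

theorem summable_mul_logSum_div {w : ℕ → ℝ} (hw : Summable w) (A : Set ℤ) (n : ℕ) :
    Summable fun m => w m * logSum A (n / m) := by
  refine Summable.of_norm_bounded (hw.abs.mul_right (logSum A n)) fun m => ?_
  rw [norm_mul, Real.norm_eq_abs, Real.norm_of_nonneg (logSum_nonneg A _)]
  exact mul_le_mul_of_nonneg_left (logSum_mono A (Nat.div_le_self n m)) (abs_nonneg _)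

theorem tendsto_tsum_mul_logWeight_sub {w : ℕ → ℝ} (hw : Summable w) (hw0 : w 0 = 0)
    (A : Set ℤ) :
    Tendsto (fun n : ℕ => (∑' m, w m) * logWeight A n -
      (Real.log n)⁻¹ * ∑' m, w m * logSum A (n / m)) atTop (𝓝 0) := by
  have eventually_le : ∀ᶠ n in atTop, logWeight univ n ≤ 2 :=
    hasLogDensity_univ.eventually_le_const one_lt_two
  have dominated : Tendsto
      (fun n : ℕ => ∑' m, w m * ((Real.log n)⁻¹ * (logSum A n - logSum A (n / m)))) atTop
      (𝓝 (∑' _ : ℕ, 0)) := by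
    refine tendsto_tsum_of_dominated_convergence (hw.abs.mul_right 2) (fun m => ?_) ?_
    · obtain rfl | hm := m.eq_zero_or_pos
      · simp [hw0]
      · simpa using (tendsto_inv_log_mul_logSum_sub_logSum_div A hm).const_mul (w m)
    · filter_upwards [eventually_le] with n hn m
      rw [norm_mul, Real.norm_eq_abs, Real.norm_eq_abs]
      exact mul_le_mul_of_nonneg_left
        ((abs_inv_log_mul_logSum_sub_logSum_div_le A m n).trans hn) (abs_nonneg _)
  rw [tsum_zero] at dominated
  refine dominated.congr fun n => ?_
  rw [logWeight_eq_inv_log_mul_logSum, ← tsum_mul_left, ← tsum_mul_right,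
    ← (hw.mul_right _).tsum_sub ((summable_mul_logSum_div hw A n).mul_left _)]
  exact tsum_congr fun m => by ring

end LogWeight

section Factorization

variable {s : Finset ℕ} {u v m : ℕ}

/-- The `s`-rough numbers: the positive integers with no prime factor in `s`, the counterpart of
`Nat.factoredNumbers s`. -/
def roughNumbers (s : Finset ℕ) : Set ℕ := {v | v ≠ 0 ∧ Disjoint v.primeFactors s}

theorem mul_mem_roughNumbers (hu : u ∈ roughNumbers s) (hv : v ∈ roughNumbers s) :
    u * v ∈ roughNumbers s :=
  ⟨mul_ne_zero hu.1 hv.1, by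
    rw [Nat.primeFactors_mul hu.1 hv.1]; exact Finset.disjoint_union_left.2 ⟨hu.2, hv.2⟩⟩

theorem coprime_of_mem_factoredNumbers_of_mem_roughNumbers (hu : u ∈ Nat.factoredNumbers s)
    (hv : v ∈ roughNumbers s) : u.Coprime v := by
  rw [← Nat.disjoint_primeFactors (Nat.ne_zero_of_mem_factoredNumbers hu) hv.1]
  exact (hv.2.mono_right (Nat.primeFactors_subset_of_mem_factoredNumbers hu)).symm

theorem exists_factored_mul_rough (s : Finset ℕ) (hm : m ≠ 0) :
    ∃ u ∈ Nat.factoredNumbers s, ∃ v ∈ roughNumbers s, u * v = m := by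
  have one_factored : 1 ∈ Nat.factoredNumbers s := by simp [Nat.mem_factoredNumbers]
  have one_rough : 1 ∈ roughNumbers s := by simp [roughNumbers]
  induction m using Nat.recOnMul with
  | zero => exact absurd rfl hm
  | one => exact ⟨1, one_factored, 1, one_rough, one_mul 1⟩
  | prime p hp =>
    by_cases hps : p ∈ s
    · exact ⟨p, by simp [Nat.mem_factoredNumbers, Nat.primeFactorsList_prime hp, hp.ne_zero, hps],
        1, one_rough, mul_one p⟩
    · exact ⟨1, one_factored, p, by simp [roughNumbers, hp.primeFactors, hp.ne_zero, hps],
        one_mul p⟩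
  | mul a b iha ihb =>
    obtain ⟨u, hu, v, hv, rfl⟩ := iha (left_ne_zero_of_mul hm)
    obtain ⟨u', hu', v', hv', rfl⟩ := ihb (right_ne_zero_of_mul hm)
    exact ⟨u * u', Nat.mul_mem_factoredNumbers hu hu', v * v', mul_mem_roughNumbers hv hv',
      mul_mul_mul_comm u u' v v'⟩

theorem eq_and_eq_of_factored_mul_rough_eq {u' v' : ℕ} (hu : u ∈ Nat.factoredNumbers s)
    (hv : v ∈ roughNumbers s) (hu' : u' ∈ Nat.factoredNumbers s) (hv' : v' ∈ roughNumbers s)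
    (h : u * v = u' * v') : u = u' ∧ v = v' := by
  have hcop : u.Coprime v' := coprime_of_mem_factoredNumbers_of_mem_roughNumbers hu hv'
  have hcop' : u'.Coprime v := coprime_of_mem_factoredNumbers_of_mem_roughNumbers hu' hv
  have hdvd : u ∣ u' := hcop.dvd_of_dvd_mul_right (h ▸ dvd_mul_right u v)
  have hdvd' : u' ∣ u := hcop'.dvd_of_dvd_mul_right (h ▸ dvd_mul_right u' v')
  obtain rfl := Nat.dvd_antisymm hdvd hdvd'
  exact ⟨rfl, Nat.eq_of_mul_eq_mul_left (Nat.pos_of_ne_zero hu.1) h⟩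

theorem sum_Icc_eq_sum_factored_sum_rough {M : Type*} [AddCommMonoid M] (s : Finset ℕ)
    (f : ℕ → M) (n : ℕ) :
    ∑ m ∈ Finset.Icc 1 n, f m =
      ∑ u ∈ Finset.Icc 1 n with u ∈ Nat.factoredNumbers s,
        ∑ v ∈ Finset.Icc 1 (n / u) with v ∈ roughNumbers s, f (u * v) := by
  rw [Finset.sum_sigma']
  symm
  refine Finset.sum_nbij (fun x => x.1 * x.2) ?_ ?_ ?_ fun _ _ => rfl
  · rintro ⟨u, v⟩ h
    simp only [Finset.mem_sigma, Finset.mem_filter, Finset.mem_Icc] at h ⊢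
    obtain ⟨⟨⟨hu, -⟩, -⟩, ⟨hv, hvn⟩, -⟩ := h
    exact ⟨Nat.mul_pos hu hv, (Nat.mul_le_mul_left u hvn).trans (Nat.mul_div_le n u)⟩
  · rintro ⟨u, v⟩ h ⟨u', v'⟩ h' heq
    simp only [Finset.coe_sigma, Set.mem_sigma_iff, Finset.mem_coe, Finset.mem_filter] at h h'
    obtain ⟨rfl, rfl⟩ := eq_and_eq_of_factored_mul_rough_eq h.1.2 h.2.2 h'.1.2 h'.2.2 heq
    rfl
  · intro m hm
    obtain ⟨hm1, hmn⟩ := Finset.mem_Icc.1 (Finset.mem_coe.1 hm)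
    obtain ⟨u, hu, v, hv, rfl⟩ := exists_factored_mul_rough s (Nat.pos_iff_ne_zero.1 hm1)
    have hu0 : 0 < u := Nat.pos_of_ne_zero hu.1
    have hv0 : 0 < v := Nat.pos_of_ne_zero hv.1
    refine ⟨⟨u, v⟩, ?_, rfl⟩
    simp only [Finset.coe_sigma, Set.mem_sigma_iff, Finset.mem_coe, Finset.mem_filter,
      Finset.mem_Icc]
    exact ⟨⟨⟨hu0, (Nat.le_mul_of_pos_right u hv0).trans hmn⟩, hu⟩,
      ⟨hv0, (Nat.le_div_iff_mul_le hu0).2 (mul_comm u v ▸ hmn)⟩, hv⟩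

theorem summable_indicator_factoredNumbers_inv (s : Finset ℕ) :
    Summable ((Nat.factoredNumbers s).indicator fun u => (u : ℝ)⁻¹) := by
  let inv : ℕ →* ℝ :=
    { toFun := fun u => (u : ℝ)⁻¹
      map_one' := by simp
      map_mul' := fun a b => by rw [Nat.cast_mul, mul_inv] }
  have norm_inv_lt_one : ∀ {p : ℕ}, p.Prime → ‖inv p‖ < 1 := fun {p} hp => by
    simpa [inv] using inv_lt_one_of_one_lt₀ (Nat.one_lt_cast (α := ℝ).2 hp.one_lt)
  exact summable_subtype_iff_indicator.1
    (EulerProduct.summable_and_hasSum_factoredNumbers_prod_filter_prime_geometric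
      norm_inv_lt_one s).2.summable

end Factorization

section DependsOnPrimes

variable {S : Set ℕ} {s : Finset ℕ} {A D : Set ℤ} {u v : ℕ}

/-- Whether a positive integer belongs to `A` depends only on its `p`-adic valuations for
`p ∈ S`. Nothing is required of the nonpositive members of `A`, which `logWeight` does not see. -/
def DependsOnPrimes (S : Set ℕ) (A : Set ℤ) : Prop :=
  ∀ ⦃m n : ℕ⦄, m ≠ 0 → n ≠ 0 → (∀ p ∈ S, m.factorization p = n.factorization p) →
    ((m : ℤ) ∈ A ↔ (n : ℤ) ∈ A)

theorem dependsOnPrimes_univ (S : Set ℕ) : DependsOnPrimes S univ := fun _ _ _ _ _ => by simp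

theorem dependsOnPrimes_multiplesZ {B : Set ℕ} (hB : ∀ b ∈ B, ∀ p : ℕ, p.Prime → p ∣ b → p ∈ S) :
    DependsOnPrimes S (multiplesZ B) := by
  intro m n hm hn h
  simp only [multiplesZ, mem_ofPred_eq, Int.natCast_dvd_natCast]
  refine exists_congr fun b => and_congr_right fun hb => ?_
  rw [Nat.dvd_iff_prime_pow_dvd_dvd m, Nat.dvd_iff_prime_pow_dvd_dvd n]
  refine forall₄_congr fun p k hp hpk => ?_
  obtain rfl | hk := eq_or_ne k 0
  · simp
  have hpS : p ∈ S := hB b hb p hp ((dvd_pow_self p hk).trans hpk)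
  rw [hp.pow_dvd_iff_le_factorization hm, hp.pow_dvd_iff_le_factorization hn, h p hpS]

theorem DependsOnPrimes.mul_mem_iff_left (hD : DependsOnPrimes s D)
    (hu : u ∈ Nat.factoredNumbers s) (hv : v ∈ roughNumbers s) :
    ((u * v : ℕ) : ℤ) ∈ D ↔ (u : ℤ) ∈ D := by
  refine hD (mul_ne_zero hu.1 hv.1) hu.1 fun p hp => ?_
  have hpv : v.factorization p = 0 := by
    rw [← Finsupp.notMem_support_iff, Nat.support_factorization]
    exact Finset.disjoint_right.1 hv.2 hp
  rw [Nat.factorization_mul hu.1 hv.1, Finsupp.add_apply, hpv, add_zero]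

theorem DependsOnPrimes.mul_mem_iff_right (hA : DependsOnPrimes (s : Set ℕ)ᶜ A)
    (hu : u ∈ Nat.factoredNumbers s) (hv : v ∈ roughNumbers s) :
    ((u * v : ℕ) : ℤ) ∈ A ↔ (v : ℤ) ∈ A := by
  refine hA (mul_ne_zero hu.1 hv.1) hv.1 fun p hp => ?_
  have hpu : u.factorization p = 0 := by
    rw [← Finsupp.notMem_support_iff, Nat.support_factorization]
    exact fun h => hp (Nat.primeFactors_subset_of_mem_factoredNumbers hu h)
  rw [Nat.factorization_mul hu.1 hv.1, Finsupp.add_apply, hpu, zero_add]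

end DependsOnPrimes

section Independence

variable {s : Finset ℕ} {A D : Set ℤ}

/-- The weight giving mass `1/u` to each `u ∈ D` all of whose prime factors lie in `s`. Its total
mass measures the part of `D` visible to the primes of `s`. -/
def factoredWeight (s : Finset ℕ) (D : Set ℤ) : ℕ → ℝ :=
  (Nat.factoredNumbers s ∩ (↑) ⁻¹' D).indicator fun u => (u : ℝ)⁻¹

theorem factoredWeight_nonneg (s : Finset ℕ) (D : Set ℤ) (u : ℕ) : 0 ≤ factoredWeight s D u :=
  indicator_apply_nonneg fun _ => by positivity

theorem factoredWeight_zero (s : Finset ℕ) (D : Set ℤ) : factoredWeight s D 0 = 0 := by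
  simp [factoredWeight]

theorem summable_factoredWeight (s : Finset ℕ) (D : Set ℤ) : Summable (factoredWeight s D) :=
  (summable_indicator_factoredNumbers_inv s).of_nonneg_of_le (factoredWeight_nonneg s D)
    fun u => indicator_le_indicator_apply_of_subset inter_subset_left (by positivity)

theorem tsum_factoredWeight_univ_pos (s : Finset ℕ) : 0 < ∑' u, factoredWeight s univ u := by
  refine (summable_factoredWeight s univ).tsum_pos (factoredWeight_nonneg s univ) 1 ?_
  simp [factoredWeight, Nat.mem_factoredNumbers]

theorem sum_rough_indicator_inter_eq (hA : DependsOnPrimes (s : Set ℕ)ᶜ A)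
    (hD : DependsOnPrimes s D) {u : ℕ} (hu : u ∈ Nat.factoredNumbers s) (n : ℕ) :
    ∑ v ∈ Finset.Icc 1 n with v ∈ roughNumbers s,
        (A ∩ D).indicator (fun m : ℤ => (m : ℝ)⁻¹) ((u * v : ℕ) : ℤ) =
      factoredWeight s D u * logSum (A ∩ (↑) '' roughNumbers s) n := by
  rw [logSum, Finset.mul_sum, Finset.sum_filter]
  refine Finset.sum_congr rfl fun v _ => ?_
  by_cases hv : v ∈ roughNumbers s
  · have huvA := hA.mul_mem_iff_right hu hv
    have huvD := hD.mul_mem_iff_left hu hv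
    by_cases huD : (u : ℤ) ∈ D <;> by_cases hvA : (v : ℤ) ∈ A <;>
      simp_all [factoredWeight, mul_comm]
  · simp [hv]

theorem logSum_inter_eq_tsum (hA : DependsOnPrimes (s : Set ℕ)ᶜ A) (hD : DependsOnPrimes s D)
    (n : ℕ) :
    logSum (A ∩ D) n =
      ∑' u, factoredWeight s D u * logSum (A ∩ (↑) '' roughNumbers s) (n / u) := by
  rw [logSum, sum_Icc_eq_sum_factored_sum_rough s, Finset.sum_congr rfl fun u hu =>
    sum_rough_indicator_inter_eq hA hD (Finset.mem_filter.1 hu).2 (n / u)]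
  refine (tsum_eq_sum fun u hu => ?_).symm
  by_cases huF : u ∈ Nat.factoredNumbers s
  · have hnu : n < u := by
      by_contra! hun
      exact hu (by simp [huF, hun, Nat.one_le_iff_ne_zero, huF.1])
    rw [Nat.div_eq_of_lt hnu, logSum_zero, mul_zero]
  · simp [factoredWeight, huF]

theorem tendsto_tsum_factoredWeight_mul_logWeight_sub (hA : DependsOnPrimes (s : Set ℕ)ᶜ A)
    (hD : DependsOnPrimes s D) :
    Tendsto (fun n => (∑' u, factoredWeight s D u) * logWeight (A ∩ (↑) '' roughNumbers s) n -
      logWeight (A ∩ D) n) atTop (𝓝 0) := by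
  refine (tendsto_tsum_mul_logWeight_sub (summable_factoredWeight s D) (factoredWeight_zero s D)
    (A ∩ (↑) '' roughNumbers s)).congr fun n => ?_
  rw [logWeight_eq_inv_log_mul_logSum (A ∩ D), logSum_inter_eq_tsum hA hD]

/-- The logarithmic density of a set depending only on the primes in `s`
(see `DependsOnPrimes.hasLogDensity`), as a ratio of sums of reciprocals. -/
def factoredDensity (s : Finset ℕ) (D : Set ℤ) : ℝ :=
  (∑' u, factoredWeight s D u) / ∑' u, factoredWeight s univ u

theorem tendsto_logWeight_inter_sub_factoredDensity_mul (hA : DependsOnPrimes (s : Set ℕ)ᶜ A)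
    (hD : DependsOnPrimes s D) :
    Tendsto (fun n => logWeight (A ∩ D) n - factoredDensity s D * logWeight A n) atTop (𝓝 0) := by
  have h := ((tendsto_tsum_factoredWeight_mul_logWeight_sub hA
    (dependsOnPrimes_univ s)).const_mul (factoredDensity s D)).sub
    (tendsto_tsum_factoredWeight_mul_logWeight_sub hA hD)
  rw [mul_zero, sub_zero] at h
  refine h.congr fun n => ?_
  have hmass := (tsum_factoredWeight_univ_pos s).ne'
  rw [inter_univ, factoredDensity]
  field_simp
  ring

theorem DependsOnPrimes.hasLogDensity (hD : DependsOnPrimes s D) :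
    HasLogDensity D (factoredDensity s D) := by
  have h := (tendsto_logWeight_inter_sub_factoredDensity_mul (dependsOnPrimes_univ _) hD).add
    (hasLogDensity_univ.const_mul (factoredDensity s D))
  simpa [HasLogDensity] using h

theorem logDensLow_sdiff_of_dependsOnPrimes (hA : DependsOnPrimes (s : Set ℕ)ᶜ A)
    (hD : DependsOnPrimes s D) :
    logDensLow (A \ D) = (1 - logDensLow D) * logDensLow A := by
  have h := tendsto_logWeight_inter_sub_factoredDensity_mul hA hD
  rw [hD.hasLogDensity.logDensLow_eq, logDensLow, logDensLow,
    ← liminf_const_mul_of_nonneg (sub_nonneg.2 hD.hasLogDensity.le_one)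
      (isBoundedUnder_le_logWeight A) (isBoundedUnder_ge_logWeight A)]
  refine (liminf_eq_of_tendsto_sub_zero (isBoundedUnder_le_logWeight (A \ D))
    (isBoundedUnder_ge_logWeight (A \ D)) (h.congr fun n => ?_)).symm
  rw [logWeight_sdiff]
  ring

end Independence

theorem logDensity_btilde_decomposition_general (B : Set ℕ) (N : ℕ) :
    logDensLow (multiplesZ (Btilde B N)) =
      logDensLow (multiplesZ (Btilde B N) \ multiplesZ (Bsmooth B N)) +
        logDensLow (multiplesZ (Btilde B N)) * logDensLow (multiplesZ (Bsmooth B N)) := by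
  have hsmooth : DependsOnPrimes (Finset.range (N + 1)) (multiplesZ (Bsmooth B N)) :=
    dependsOnPrimes_multiplesZ fun b hb p hp hpb => by simpa [Nat.lt_succ_iff] using hb.2 p hp hpb
  have hrough : DependsOnPrimes (Finset.range (N + 1) : Set ℕ)ᶜ (multiplesZ (Btilde B N)) :=
    dependsOnPrimes_multiplesZ fun b hb p hp hpb => by simpa [Nat.succ_le_iff] using hb.2 p hp hpb
  rw [logDensLow_sdiff_of_dependsOnPrimes hrough hsmooth]
  ring

/-- `δ(M_{B̃^(N)}) = δ(M_{B̃^(N)} ∖ M_{B^(N)}) + δ(M_{B̃^(N)})·δ(M_{B^(N)})`. -/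
theorem logDensity_btilde_decomposition (B : Set ℕ) (hB0 : 0 ∉ B) (hprim : Primitive B)
    (N : ℕ) :
    logDensLow (multiplesZ (Btilde B N)) =
      logDensLow (multiplesZ (Btilde B N) \ multiplesZ (Bsmooth B N)) +
        logDensLow (multiplesZ (Btilde B N)) * logDensLow (multiplesZ (Bsmooth B N)) :=
  logDensity_btilde_decomposition_general B N
end
end
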